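/- Let A be a finite-dimensional real affine space. The linear map that sends a symmetric bilinear form ĝ on the dual space of the space of affine functions A → ℝ (the linear hull of A) to the function P ↦ (1/2)·ĝ(z_P, z_P), where z_P is the evaluation functional at P, is injective, and its image is exactly the subspace of quadratic functions A → ℝ. Moreover, if ĝ corresponds in this way to the quadratic function δ, then ĝ(z_P, z_Q) = 4δ(midpoint(P,Q)) − δ(P) − δ(Q) for all P, Q ∈ A. -/

import Mathlib

/-!
Fix an origin `O`. An affine function `f` is determined by `f O` and its linear part, and `V` is
reflexive, so the linear hull is `ℝ × V`: every functional has the form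
`φ f = f O * e φ + f.linear (π φ)` (`exists_hull_coords`). In particular each `φ` is a linear
combination of `z_O` and some `z_Q`, so the evaluation functionals span the linear hull.

Since `z` turns affine combinations into linear ones, expanding `g (z_M) (z_M)` at the midpoint `M`
of `P` and `Q` gives the polarization formula, and injectivity follows from the spanning property.
The same expansion at a general point of the line `PQ` shows that `P ↦ g (z_P) (z_P) / 2` is
quadratic.

Conversely, a quadratic `δ` is a polynomial of degree at most two on every line
(`IsQuadraticFn.line`). On a plane it is then a polynomial of degree at most two in each coordinate,
and its restrictions to the two diagonals kill the monomials of total degree three and four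
(`IsQuadraticFn.plane`). Hence the odd part of `v ↦ δ (v +ᵥ O)` is linear, and the even part minus
its value at `0` obeys the parallelogram law, so by the Jordan–von Neumann argument it comes from a
symmetric bilinear form (`IsQuadraticFn.exists_forms`). The constant, linear and bilinear parts
assemble to a symmetric form on `ℝ × V`.
-/

/-- A function `δ : A → ℝ` on a real affine space is *quadratic* if for all points
`P, Q` and all `α, β ∈ ℝ` with `α + β = 1`,
`δ(α·P + β·Q) = α(α−β)·δ(P) + β(β−α)·δ(Q) + 4αβ·δ(midpoint(P,Q))`. -/
def IsQuadraticFn {V A : Type*} [AddCommGroup V] [Module ℝ V] [AddTorsor V A]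
    (δ : A → ℝ) : Prop :=
  ∀ (P Q : A) (α β : ℝ), α + β = 1 →
    δ (AffineMap.lineMap P Q β) =
      α * (α - β) * δ P + β * (β - α) * δ Q + 4 * α * β * δ (midpoint ℝ P Q)

/-- The evaluation functional `z_P` at a point `P`, an element of the linear hull
(the dual of the space of affine functions `A → ℝ`). -/
def evalAff {V A : Type*} [AddCommGroup V] [Module ℝ V] [AddTorsor V A] (P : A) :
    Module.Dual ℝ (A →ᵃ[ℝ] ℝ) where
  toFun f := f P
  map_add' f g := by simp
  map_smul' c f := by simp

lemma evalAff_apply {V A : Type*} [AddCommGroup V] [Module ℝ V] [AddTorsor V A] (P : A)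
    (f : A →ᵃ[ℝ] ℝ) : evalAff P f = f P := rfl

lemma evalAff_lineMap {V A : Type*} [AddCommGroup V] [Module ℝ V] [AddTorsor V A] (P Q : A)
    (t : ℝ) : (evalAff (AffineMap.lineMap P Q t) : Module.Dual ℝ (A →ᵃ[ℝ] ℝ)) =
      (1 - t) • evalAff P + t • evalAff Q := by
  ext f
  simp only [evalAff_apply, LinearMap.add_apply, LinearMap.smul_apply, smul_eq_mul,
    AffineMap.apply_lineMap, AffineMap.lineMap_apply_ring]

lemma evalAff_midpoint {V A : Type*} [AddCommGroup V] [Module ℝ V] [AddTorsor V A] (P Q : A) :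
    (evalAff (midpoint ℝ P Q) : Module.Dual ℝ (A →ᵃ[ℝ] ℝ)) =
      (1 / 2 : ℝ) • evalAff P + (1 / 2 : ℝ) • evalAff Q := by
  rw [midpoint, evalAff_lineMap]
  norm_num

/-- A choice of origin identifies the linear hull with `ℝ × V`: `e` is evaluation on the constant
function `1`, and `π` is the restriction to linear functionals, read in `V` by reflexivity. -/
lemma exists_hull_coords {V A : Type*} [AddCommGroup V] [Module ℝ V] [AddTorsor V A]
    [FiniteDimensional ℝ V] (O : A) :
    ∃ (e : Module.Dual ℝ (A →ᵃ[ℝ] ℝ) →ₗ[ℝ] ℝ) (π : Module.Dual ℝ (A →ᵃ[ℝ] ℝ) →ₗ[ℝ] V),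
      (∀ φ f, φ f = f O * e φ + f.linear (π φ)) ∧
      ∀ P, e (evalAff P) = 1 ∧ π (evalAff P) = P -ᵥ O := by
  let L : Module.Dual ℝ V →ₗ[ℝ] (A →ᵃ[ℝ] ℝ) :=
    { toFun := fun h => h.toAffineMap.comp (AffineEquiv.vaddConst ℝ O).symm.toAffineMap
      map_add' := fun h k => by ext P; simp
      map_smul' := fun c h => by ext P; simp }
  have hL : ∀ h P, L h P = h (P -ᵥ O) := fun h P => rfl
  let π : Module.Dual ℝ (A →ᵃ[ℝ] ℝ) →ₗ[ℝ] V :=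
    (Module.evalEquiv ℝ V).symm.toLinearMap ∘ₗ L.dualMap
  have hπ : ∀ φ (h : Module.Dual ℝ V), h (π φ) = φ (L h) := fun φ h =>
    Module.apply_evalEquiv_symm_apply (R := ℝ) (M := V) h (L.dualMap φ)
  refine ⟨LinearMap.applyₗ (AffineMap.const ℝ A (1 : ℝ)), π, fun φ f => ?_, fun P => ⟨?_, ?_⟩⟩
  · have hf : f = f O • AffineMap.const ℝ A (1 : ℝ) + L f.linear := by
      ext P
      simp [hL]
    rw [hπ]
    conv_lhs => rw [hf]
    simp
  · simp [evalAff_apply]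
  · rw [← sub_eq_zero, ← Module.forall_dual_apply_eq_zero_iff ℝ]
    intro h
    rw [map_sub, hπ, evalAff_apply, hL, sub_self]

/-- Polarization of `P ↦ g (z_P) (z_P) / 2`. -/
lemma polarization {V A : Type*} [AddCommGroup V] [Module ℝ V] [AddTorsor V A]
    (g : LinearMap.BilinForm ℝ (Module.Dual ℝ (A →ᵃ[ℝ] ℝ))) (δ : A → ℝ)
    (hg : ∀ x y, g x y = g y x)
    (h : ∀ P : A, δ P = (1/2 : ℝ) * g (evalAff P) (evalAff P)) (P Q : A) :
    g (evalAff P) (evalAff Q) = 4 * δ (midpoint ℝ P Q) - δ P - δ Q := by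
  simp only [h, evalAff_midpoint, map_add, map_smul, LinearMap.add_apply, LinearMap.smul_apply,
    smul_eq_mul]
  rw [hg (evalAff Q) (evalAff P)]
  ring

lemma IsQuadraticFn.line {V A : Type*} [AddCommGroup V] [Module ℝ V] [AddTorsor V A]
    {δ : A → ℝ} (hδ : IsQuadraticFn δ) (P : A) (w : V) (t : ℝ) :
    δ (t • w +ᵥ P) = δ P + (δ (w +ᵥ P) - δ (-w +ᵥ P)) / 2 * t
      + ((δ (w +ᵥ P) + δ (-w +ᵥ P)) / 2 - δ P) * t ^ 2 := by
  -- Parametrize from `-w +ᵥ P` to `w +ᵥ P`, whose midpoint is `P`.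
  have h := hδ (-w +ᵥ P) (w +ᵥ P) ((1 - t) / 2) ((1 + t) / 2) (by ring)
  have hm : midpoint ℝ (-w +ᵥ P) (w +ᵥ P) = P := by
    rw [← midpoint_vadd_midpoint, midpoint_neg_self, midpoint_self, zero_vadd]
  have hl : AffineMap.lineMap (-w +ᵥ P) (w +ᵥ P) ((1 + t) / 2) = t • w +ᵥ P := by
    rw [AffineMap.lineMap_apply, vadd_vsub_vadd_cancel_right, vadd_vadd]
    congr 1
    module
  rw [hm, hl] at h
  rw [h]
  ring

/-- On every affine plane a quadratic function is a polynomial of total degree at most two. -/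
lemma IsQuadraticFn.plane {V A : Type*} [AddCommGroup V] [Module ℝ V] [AddTorsor V A]
    {δ : A → ℝ} (hδ : IsQuadraticFn δ) (O : A) (u v : V) :
    ∃ a b c d k : ℝ, ∀ x y : ℝ, δ ((x • u + y • v) +ᵥ O) =
      δ O + a * x + b * y + c * x ^ 2 + d * (x * y) + k * y ^ 2 := by
  have hline : ∀ p w : V, ∃ b c : ℝ, ∀ t : ℝ, δ ((p + t • w) +ᵥ O) =
      δ (p +ᵥ O) + b * t + c * t ^ 2 := fun p w => ⟨_, _, fun t => by
    rw [add_comm p, add_vadd]; exact hδ.line _ w t⟩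
  have hx : ∀ x y : ℝ, δ ((x • u + y • v) +ᵥ O) = δ ((y • v) +ᵥ O)
      + (δ ((u + y • v) +ᵥ O) - δ ((-u + y • v) +ᵥ O)) / 2 * x
      + ((δ ((u + y • v) +ᵥ O) + δ ((-u + y • v) +ᵥ O)) / 2 - δ ((y • v) +ᵥ O)) * x ^ 2 := by
    intro x y
    have := hδ.line ((y • v) +ᵥ O) u x
    simpa only [vadd_vadd] using this
  obtain ⟨b₀, c₀, h₀⟩ := hline 0 v
  obtain ⟨b₁, c₁, h₁⟩ := hline u v
  obtain ⟨b₂, c₂, h₂⟩ := hline (-u) v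
  simp only [zero_add, zero_vadd] at h₀
  simp only [h₀, h₁, h₂] at hx
  obtain ⟨b₃, c₃, h₃⟩ := hline 0 (u + v)
  obtain ⟨b₄, c₄, h₄⟩ := hline 0 (u - v)
  have e₃ : ∀ t : ℝ, δ ((t • u + t • v) +ᵥ O) = δ O + b₃ * t + c₃ * t ^ 2 := by
    intro t; rw [← smul_add]; simpa using h₃ t
  have e₄ : ∀ t : ℝ, δ ((t • u + (-t) • v) +ᵥ O) = δ O + b₄ * t + c₄ * t ^ 2 := by
    intro t; rw [neg_smul, ← sub_eq_add_neg, ← smul_sub]; simpa using h₄ t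
  simp only [hx] at e₃ e₄
  -- The coefficients of `x²y²`, `xy²` and `x²y` vanish.
  have p1 := e₃ 1
  have p2 := e₃ (-1)
  have p3 := e₃ 2
  have p4 := e₃ (-2)
  have m1 := e₄ 1
  have m2 := e₄ (-1)
  have m3 := e₄ 2
  have m4 := e₄ (-2)
  have k22 : (c₁ + c₂) / 2 - c₀ = 0 := by linarith
  have k12 : (c₁ - c₂) / 2 = 0 := by linarith
  have k21 : (b₁ + b₂) / 2 - b₀ = 0 := by linarith
  refine ⟨(δ (u +ᵥ O) - δ (-u +ᵥ O)) / 2, b₀, (δ (u +ᵥ O) + δ (-u +ᵥ O)) / 2 - δ O,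
    (b₁ - b₂) / 2, c₀, fun x y => ?_⟩
  rw [hx]
  linear_combination x ^ 2 * y ^ 2 * k22 + x * y ^ 2 * k12 + x ^ 2 * y * k21

/-- A quadratic function is the sum of a constant, a linear form and a quadratic form in the
displacement from `O`. -/
lemma IsQuadraticFn.exists_forms {V A : Type*} [AddCommGroup V] [Module ℝ V] [AddTorsor V A]
    {δ : A → ℝ} (hδ : IsQuadraticFn δ) (O : A) :
    ∃ (l : V →ₗ[ℝ] ℝ) (B : LinearMap.BilinForm ℝ V), (∀ u v, B u v = B v u) ∧
      ∀ v, δ (v +ᵥ O) = δ O + l v + (1 / 2 : ℝ) * B v v := by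
  let l : V → ℝ := fun v => (δ (v +ᵥ O) - δ (-v +ᵥ O)) / 2
  let s : V → ℝ := fun v => (δ (v +ᵥ O) + δ (-v +ᵥ O)) / 2 - δ O
  have key : ∀ u v : V, ∃ a b c d k : ℝ, ∀ x y : ℝ,
      l (x • u + y • v) = a * x + b * y ∧
      s (x • u + y • v) = c * x ^ 2 + d * (x * y) + k * y ^ 2 := by
    intro u v
    obtain ⟨a, b, c, d, k, h⟩ := hδ.plane O u v
    refine ⟨a, b, c, d, k, fun x y => ?_⟩
    have hn : -(x • u + y • v) = (-x) • u + (-y) • v := by module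
    simp only [l, s, hn, h]
    constructor <;> ring
  have hladd : ∀ u v, l (u + v) = l u + l v := by
    intro u v
    obtain ⟨a, b, c, d, k, h⟩ := key u v
    have h1 := (h 1 1).1
    have h2 := (h 1 0).1
    have h3 := (h 0 1).1
    simp only [one_smul, zero_smul, add_zero, zero_add] at h1 h2 h3
    linarith
  have hlsmul : ∀ (x : ℝ) u, l (x • u) = x * l u := by
    intro x u
    obtain ⟨a, b, c, d, k, h⟩ := key u 0
    have h1 := (h x 0).1
    have h2 := (h 1 0).1
    simp only [one_smul, zero_smul, add_zero] at h1 h2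
    rw [h1, h2]; ring
  have hpar : ∀ u v, s (u + v) + s (u - v) = 2 * s u + 2 * s v := by
    intro u v
    obtain ⟨a, b, c, d, k, h⟩ := key u v
    have h1 := (h 1 1).2
    have h2 := (h 1 0).2
    have h3 := (h 0 1).2
    have h4 := (h 1 (-1)).2
    simp only [one_smul, zero_smul, add_zero, zero_add, neg_smul, ← sub_eq_add_neg] at h1 h2 h3 h4
    linarith
  let b : V → V → ℝ := fun u v => s (u + v) - s u - s v
  have hbsymm : ∀ u v, b u v = b v u := by
    intro u v
    simp only [b, add_comm u v]; ring
  have hbsmul : ∀ (x : ℝ) u v, b (x • u) v = x * b u v := by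
    intro x u v
    obtain ⟨a, b', c, d, k, h⟩ := key u v
    have h1 := (h x 1).2
    have h2 := (h x 0).2
    have h3 := (h 0 1).2
    have h4 := (h 1 1).2
    have h5 := (h 1 0).2
    simp only [one_smul, zero_smul, add_zero, zero_add] at h1 h2 h3 h4 h5
    simp only [b, h1, h2, h3, h4, h5]; ring
  have hbadd : ∀ u w v, b (u + w) v = b u v + b w v := by
    intro u w v
    have h1 := hpar (u + w) v
    have h2 := hpar (u + v) w
    have h3 := hpar u (w - v)
    have h4 := hpar w v
    rw [show u + v + w = u + w + v by abel, show u + v - w = u - (w - v) by abel] at h2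
    rw [show u + (w - v) = u + w - v by abel] at h3
    simp only [b]
    linarith
  refine ⟨⟨⟨l, hladd⟩, hlsmul⟩, LinearMap.mk₂ ℝ b hbadd hbsmul
    (fun u v w => by rw [hbsymm, hbadd, hbsymm v, hbsymm w])
    (fun x u v => by rw [hbsymm, hbsmul, hbsymm v, smul_eq_mul]), hbsymm, fun v => ?_⟩
  have hs0 : s (v + v) = 4 * s v := by
    have h1 := hpar v v
    have h0 : s 0 = 0 := by simp [s]
    rw [sub_self, h0] at h1
    linarith
  change δ (v +ᵥ O) = δ O + l v + (1 / 2 : ℝ) * (s (v + v) - s v - s v)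
  rw [hs0]
  simp only [l, s]
  ring

/-- The linear map sending a symmetric bilinear form `ĝ` on the
linear hull of `A` to the function `P ↦ (1/2)·ĝ(z_P, z_P)` is injective, its image is
exactly the set of quadratic functions on `A`, and if `ĝ` corresponds to `δ` then
`ĝ(z_P, z_Q) = 4δ(midpoint(P,Q)) − δ(P) − δ(Q)`. -/
theorem stmt3 {V A : Type*} [AddCommGroup V] [Module ℝ V] [AddTorsor V A]
    [FiniteDimensional ℝ V] :
    (∀ g₁ g₂ : LinearMap.BilinForm ℝ (Module.Dual ℝ (A →ᵃ[ℝ] ℝ)),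
        (∀ x y, g₁ x y = g₁ y x) → (∀ x y, g₂ x y = g₂ y x) →
        (∀ P : A, g₁ (evalAff P) (evalAff P) = g₂ (evalAff P) (evalAff P)) →
        g₁ = g₂) ∧
    (∀ δ : A → ℝ, IsQuadraticFn δ ↔
        ∃ g : LinearMap.BilinForm ℝ (Module.Dual ℝ (A →ᵃ[ℝ] ℝ)),
          (∀ x y, g x y = g y x) ∧
          ∀ P : A, δ P = (1/2 : ℝ) * g (evalAff P) (evalAff P)) ∧
    (∀ (g : LinearMap.BilinForm ℝ (Module.Dual ℝ (A →ᵃ[ℝ] ℝ))) (δ : A → ℝ),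
        (∀ x y, g x y = g y x) →
        (∀ P : A, δ P = (1/2 : ℝ) * g (evalAff P) (evalAff P)) →
        ∀ P Q : A, g (evalAff P) (evalAff Q) =
          4 * δ (midpoint ℝ P Q) - δ P - δ Q) := by
  obtain ⟨O⟩ : Nonempty A := inferInstance
  obtain ⟨e, π, hφ, heval⟩ := exists_hull_coords (V := V) O
  refine ⟨fun g₁ g₂ hg₁ hg₂ h => ?_, fun δ => ⟨fun hδ => ?_, ?_⟩,
    fun g δ hg h P Q => polarization g δ hg h P Q⟩
  · have hPQ : ∀ P Q : A, g₁ (evalAff P) (evalAff Q) = g₂ (evalAff P) (evalAff Q) := fun P Q => by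
      rw [polarization g₁ _ hg₁ (fun _ => rfl), polarization g₂ _ hg₂ (fun _ => rfl)]
      simp only [h]
    have hdec : ∀ φ : Module.Dual ℝ (A →ᵃ[ℝ] ℝ),
        φ = (e φ - 1) • evalAff O + evalAff (π φ +ᵥ O) := fun φ => by
      ext f
      rw [hφ]
      simp only [evalAff_apply, LinearMap.add_apply, LinearMap.smul_apply, smul_eq_mul,
        AffineMap.map_vadd, vadd_eq_add]
      ring
    ext φ ψ
    rw [hdec φ, hdec ψ]
    simp only [map_add, map_smul, LinearMap.add_apply, LinearMap.smul_apply, hPQ]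
  · obtain ⟨l, B, hB, h⟩ := hδ.exists_forms O
    -- In the coordinates `(e, π)`, homogenize the constant and the linear part of `δ` by `e`.
    refine ⟨LinearMap.mk₂ ℝ
      (fun x y => 2 * δ O * e x * e y + e x * l (π y) + e y * l (π x) + B (π x) (π y))
      ?_ ?_ ?_ ?_, ?_, fun P => ?_⟩
    · intros; simp only [map_add, LinearMap.add_apply]; ring
    · intros; simp only [map_smul, LinearMap.smul_apply, smul_eq_mul]; ring
    · intros; simp only [map_add]; ring
    · intros; simp only [map_smul, smul_eq_mul]; ring
    · intro x y
      simp only [LinearMap.mk₂_apply]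
      rw [hB (π x)]; ring
    · have := h (P -ᵥ O)
      rw [vsub_vadd] at this
      simp only [LinearMap.mk₂_apply, (heval P).1, (heval P).2]
      rw [this]; ring
  · rintro ⟨g, hg, h⟩ P Q α β hαβ
    obtain rfl : α = 1 - β := by linarith
    have hpol := polarization g δ hg h P Q
    have hP := h P
    have hQ := h Q
    rw [h (AffineMap.lineMap P Q β), evalAff_lineMap]
    simp only [map_add, map_smul, LinearMap.add_apply, LinearMap.smul_apply, smul_eq_mul]
    rw [hg (evalAff Q) (evalAff P), hpol]
    linear_combination (-(1 - β) ^ 2) * hP - β ^ 2 * hQ
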